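/- Let κ be a field of characteristic 3, let k₂ = κ(u) be the rational function field over κ, and let k₁ = κ(u²) ⊆ k₂ be the image of the κ-algebra embedding of the rational function field κ(x) into κ(u) sending x to u². Write F₁ = k₁((t)) ⊆ F₂ = k₂((t)). Let E := F₂[Y]/(Y³ − Y − u·t^{−1}) and E₀ := F₁[W]/(W³ + W² + W − u²·t^{−2}). Then E₀ is a field extension of F₁ of degree 3 that is not Galois over F₁, and E₀ ⊗_{F₁} F₂ is isomorphic to E as an F₂-algebra. -/

import Mathlib

open Polynomial

open scoped TensorProduct

attribute [local instance] Algebra.TensorProduct.rightAlgebra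

/-- The ring homomorphism `k₁((t)) →+* k₂((t))` applying a ring homomorphism
`f : k₁ →+* k₂` to each coefficient of a Laurent series. -/
noncomputable def lsMap {R S : Type*} [CommRing R] [CommRing S]
    (f : R →+* S) : LaurentSeries R →+* LaurentSeries S where
  toFun x := x.map f
  map_one' := by ext g; by_cases h : g = 0 <;> simp [h]
  map_mul' x y := HahnSeries.map_mul f.toNonUnitalRingHom
  map_zero' := by ext g; simp
  map_add' x y := HahnSeries.map_add f.toAddMonoidHom

/-- The subfield `κ(u²)` of the rational function field `κ(u)`. -/
noncomputable def kOne (κ : Type) [Field κ] : IntermediateField κ (RatFunc κ) :=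
  IntermediateField.adjoin κ {(RatFunc.X : RatFunc κ) ^ 2}

/-- The element `u²` of `κ(u²)`. -/
noncomputable def uSq (κ : Type) [Field κ] : kOne κ :=
  ⟨(RatFunc.X : RatFunc κ) ^ 2,
    IntermediateField.subset_adjoin κ _ (Set.mem_singleton _)⟩

/-- The polynomial `W³ + W² + W - u²·t⁻²` over `F₁ = κ(u²)((t))`. -/
noncomputable def fZero (κ : Type) [Field κ] : Polynomial (LaurentSeries (kOne κ)) :=
  X ^ 3 + X ^ 2 + X - C (HahnSeries.single (-2 : ℤ) (uSq κ))

/-- The polynomial `Y³ - Y - u·t⁻¹` over `F₂ = κ(u)((t))`. -/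
noncomputable def fTwo (κ : Type) [Field κ] : Polynomial (LaurentSeries (RatFunc κ)) :=
  X ^ 3 - X - C (HahnSeries.single (-1 : ℤ) (RatFunc.X : RatFunc κ))

/-- The coefficientwise embedding `κ(u²)((t)) →+* κ(u)((t))`, as an algebra. -/
noncomputable def lsAlg (κ : Type) [Field κ] :
    Algebra (LaurentSeries (kOne κ)) (LaurentSeries (RatFunc κ)) :=
  (lsMap (algebraMap (kOne κ) (RatFunc κ))).toAlgebra

/-!
If `y³ - y = a` in characteristic three, then `w = y²` satisfies `w (w - 1)² = a²`, that is
`w³ + w² + w = a²`, and conversely `y = a⁻¹ w (w - 1)`. So over a field containing `a`, adjoining a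
root of `W³ + W² + W - a²` is the same as adjoining a root of `Y³ - Y - a`. The cubic, however, only
needs `c = a²` to be defined, and its discriminant is `c` itself: over a field where `c` is not a
square, the cubic cannot split in an extension of odd degree. Over `k((t))` it is irreducible as
soon as the order of `c` is negative and prime to three, because a root of negative order `n` gives
`c` order `3n`.
-/

section SquareCubic

variable {R : Type*} [CommRing R]

/-- The cubic `X³ + X² + X - c`. In characteristic three it equals `X (X - 1)² - c`, and if
`c = a²` its roots are the squares of the roots of the Artin–Schreier polynomial `X³ - X - a`. -/
noncomputable def squareCubic (c : R) : R[X] :=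
  X ^ 3 + X ^ 2 + X - C c

theorem squareCubic_eq_toPoly (c : R) :
    squareCubic c = Cubic.toPoly ⟨1, 1, 1, -c⟩ := by
  simp only [squareCubic, Cubic.toPoly, C_1, C_neg]
  ring

theorem discr_squareCubic [CharP R 3] (c : R) : Cubic.discr ⟨1, 1, 1, -c⟩ = c := by
  have h3 : (3 : R) = 0 := CharP.ofNat_eq_zero R 3
  simp only [Cubic.discr]
  linear_combination (-1 - 9 * c ^ 2 - 5 * c) * h3

theorem natDegree_squareCubic [Nontrivial R] (c : R) : (squareCubic c).natDegree = 3 := by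
  rw [squareCubic_eq_toPoly]
  exact Cubic.natDegree_of_a_ne_zero' one_ne_zero

theorem aeval_squareCubic {A : Type*} [CommRing A] [Algebra R A] (c : R) (w : A) :
    aeval w (squareCubic c) = w ^ 3 + w ^ 2 + w - algebraMap R A c := by
  simp only [squareCubic, map_sub, map_add, map_pow, aeval_X, aeval_C]

theorem root_squareCubic (c : R) :
    (AdjoinRoot.root (squareCubic c)) ^ 3 + (AdjoinRoot.root (squareCubic c)) ^ 2 +
      AdjoinRoot.root (squareCubic c) = algebraMap R (AdjoinRoot (squareCubic c)) c :=
  sub_eq_zero.mp <| (aeval_squareCubic c _).symm.trans (AdjoinRoot.eval₂_root _)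

theorem map_squareCubic {S : Type*} [CommRing S] (f : R →+* S) (c : R) :
    (squareCubic c).map f = squareCubic (f c) := by
  simp only [squareCubic, Polynomial.map_sub, Polynomial.map_add, Polynomial.map_pow, map_X, map_C]

theorem finrank_adjoinRoot_squareCubic {F : Type*} [Field F] (c : F) :
    Module.finrank F (AdjoinRoot (squareCubic c)) = 3 :=
  finrank_quotient_span_eq_natDegree.trans (natDegree_squareCubic c)

end SquareCubic

/-- Base change of `R[X]/(p)` along `R → S`, with `S` acting on the right tensor factor. -/
noncomputable def adjoinRootTensorEquiv {R : Type*} (S : Type*) [CommRing R] [CommRing S]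
    [Algebra R S] (p : R[X]) :
    AdjoinRoot p ⊗[R] S ≃ₐ[S] AdjoinRoot (p.map (algebraMap R S)) :=
  (Algebra.TensorProduct.commRight R S (AdjoinRoot p)).symm.trans <|
    (AdjoinRoot.tensorAlgEquiv p _ rfl).trans <|
      AdjoinRoot.mapAlgEquiv (Algebra.TensorProduct.rid R S S) _ _ <| .of_eq <| by
        rw [Polynomial.map_map]
        congr 1
        ext r
        simp [Algebra.algebraMap_eq_smul_one]

section ArtinSchreier

theorem three_eq_zero_of_algebra (S A : Type*) [CommRing S] [CharP S 3] [CommRing A]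
    [Algebra S A] : (3 : A) = 0 := by
  simpa only [map_ofNat, map_zero] using congrArg (algebraMap S A) (CharP.ofNat_eq_zero S 3)

variable {A : Type*} [CommRing A] {a b w y : A}

theorem cubic_sq_of_artinSchreier (h3 : (3 : A) = 0) (hy : y ^ 3 - y = a) :
    (y ^ 2) ^ 3 + (y ^ 2) ^ 2 + y ^ 2 = a ^ 2 := by
  linear_combination (y ^ 3 - y + a) * hy + y ^ 4 * h3

theorem sq_mul_mul_sub_one_of_cubic (h3 : (3 : A) = 0) (hab : a * b = 1)
    (hw : w ^ 3 + w ^ 2 + w = a ^ 2) : (b * (w * (w - 1))) ^ 2 = w := by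
  linear_combination b ^ 2 * w * hw + w * (a * b + 1) * hab - b ^ 2 * w ^ 3 * h3

theorem artinSchreier_mul_mul_sub_one_of_cubic (h3 : (3 : A) = 0) (hab : a * b = 1)
    (hw : w ^ 3 + w ^ 2 + w = a ^ 2) :
    (b * (w * (w - 1))) ^ 3 - b * (w * (w - 1)) = a := by
  have hsq := sq_mul_mul_sub_one_of_cubic h3 hab hw
  linear_combination b * (w * (w - 1)) * hsq + b * hw + a * hab - b * w ^ 2 * h3

theorem mul_mul_sub_one_sq_of_artinSchreier (hab : a * b = 1) (hy : y ^ 3 - y = a) :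
    b * (y ^ 2 * (y ^ 2 - 1)) = y := by
  linear_combination b * y * hy + y * hab

variable {S : Type*} [CommRing S]

/-- The Artin–Schreier polynomial `X³ - X - a` of characteristic three. -/
noncomputable def artinSchreierCubic (a : S) : S[X] :=
  X ^ 3 - X - C a

theorem aeval_artinSchreierCubic [Algebra S A] (a : S) (y : A) :
    aeval y (artinSchreierCubic a) = y ^ 3 - y - algebraMap S A a := by
  simp only [artinSchreierCubic, map_sub, map_pow, aeval_X, aeval_C]

theorem root_artinSchreierCubic (a : S) :
    (AdjoinRoot.root (artinSchreierCubic a)) ^ 3 - AdjoinRoot.root (artinSchreierCubic a) =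
      algebraMap S (AdjoinRoot (artinSchreierCubic a)) a :=
  sub_eq_zero.mp <| (aeval_artinSchreierCubic a _).symm.trans (AdjoinRoot.eval₂_root _)

theorem algebraMap_mul_algebraMap_inv (a : Sˣ) (A : Type*) [CommRing A] [Algebra S A] :
    algebraMap S A a * algebraMap S A ↑a⁻¹ = 1 := by
  rw [← map_mul, a.mul_inv, map_one]

variable [CharP S 3]

/-- The homomorphism `S[W]/(W³ + W² + W - a²) → S[Y]/(Y³ - Y - a)` sending `W` to `Y²`. -/
noncomputable def squareCubicToArtinSchreier (a : S) :
    AdjoinRoot (squareCubic (a ^ 2)) →ₐ[S] AdjoinRoot (artinSchreierCubic a) :=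
  AdjoinRoot.liftAlgHom _ (Algebra.ofId S _) (AdjoinRoot.root _ ^ 2) <|
    (aeval_squareCubic _ _).trans <| by
      rw [map_pow, sub_eq_zero]
      exact cubic_sq_of_artinSchreier (three_eq_zero_of_algebra S _) (root_artinSchreierCubic a)

theorem squareCubicToArtinSchreier_root (a : S) :
    squareCubicToArtinSchreier a (AdjoinRoot.root _) = AdjoinRoot.root _ ^ 2 :=
  AdjoinRoot.liftAlgHom_root ..

/-- The homomorphism `S[Y]/(Y³ - Y - a) → S[W]/(W³ + W² + W - a²)` sending `Y` to
`a⁻¹ W (W - 1)`, for a unit `a`. -/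
noncomputable def artinSchreierToSquareCubic (a : Sˣ) :
    AdjoinRoot (artinSchreierCubic (a : S)) →ₐ[S] AdjoinRoot (squareCubic (a ^ 2 : S)) :=
  AdjoinRoot.liftAlgHom _ (Algebra.ofId S _)
    (algebraMap S _ ↑a⁻¹ * (AdjoinRoot.root _ * (AdjoinRoot.root _ - 1))) <|
    (aeval_artinSchreierCubic _ _).trans <| sub_eq_zero.mpr <|
      artinSchreier_mul_mul_sub_one_of_cubic (three_eq_zero_of_algebra S _)
        (algebraMap_mul_algebraMap_inv a _) ((root_squareCubic _).trans (map_pow _ _ _))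

theorem artinSchreierToSquareCubic_root (a : Sˣ) :
    artinSchreierToSquareCubic a (AdjoinRoot.root _) =
      algebraMap S _ ↑a⁻¹ * (AdjoinRoot.root _ * (AdjoinRoot.root _ - 1)) :=
  AdjoinRoot.liftAlgHom_root ..

/-- The isomorphism `S[W]/(W³ + W² + W - a²) ≃ S[Y]/(Y³ - Y - a)`, for a unit `a`. -/
noncomputable def squareCubicEquivArtinSchreier (a : Sˣ) :
    AdjoinRoot (squareCubic (a ^ 2 : S)) ≃ₐ[S] AdjoinRoot (artinSchreierCubic (a : S)) :=
  AlgEquiv.ofAlgHom (squareCubicToArtinSchreier (a : S)) (artinSchreierToSquareCubic a)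
    (AdjoinRoot.algHom_ext <| by
      rw [AlgHom.comp_apply, artinSchreierToSquareCubic_root, map_mul, AlgHom.commutes, map_mul,
        map_sub, map_one, squareCubicToArtinSchreier_root]
      exact mul_mul_sub_one_sq_of_artinSchreier (algebraMap_mul_algebraMap_inv a _)
        (root_artinSchreierCubic _))
    (AdjoinRoot.algHom_ext <| by
      rw [AlgHom.comp_apply, squareCubicToArtinSchreier_root, map_pow,
        artinSchreierToSquareCubic_root]
      exact sq_mul_mul_sub_one_of_cubic (three_eq_zero_of_algebra S _)
        (algebraMap_mul_algebraMap_inv a _) ((root_squareCubic _).trans (map_pow _ _ _)))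

theorem nonempty_adjoinRoot_squareCubic_tensor_equiv {R : Type*} [CommRing R] [Algebra R S]
    {c : R} {a : S} (ha : IsUnit a) (hca : algebraMap R S c = a ^ 2) :
    Nonempty (AdjoinRoot (squareCubic c) ⊗[R] S ≃ₐ[S] AdjoinRoot (artinSchreierCubic a)) := by
  lift a to Sˣ using ha
  have e := adjoinRootTensorEquiv S (squareCubic c)
  rw [map_squareCubic, hca] at e
  exact ⟨e.trans (squareCubicEquivArtinSchreier a)⟩

end ArtinSchreier

section SquareDiscriminant

variable {F : Type*} [Field F]

theorem isSquare_of_isSquare_algebraMap_of_odd_finrank {E : Type*} [Ring E] [Algebra F E]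
    (hodd : Odd (Module.finrank F E)) {c : F} (hc : IsSquare (algebraMap F E c)) : IsSquare c := by
  rcases eq_or_ne c 0 with rfl | hc0
  · exact IsSquare.zero
  have hnorm : IsSquare (c ^ Module.finrank F E) := by
    rw [← Algebra.norm_algebraMap]
    exact hc.map (Algebra.norm F)
  obtain ⟨m, hm⟩ := hodd
  rw [hm, pow_succ] at hnorm
  simpa [hc0] using hnorm.div ((even_two_mul m).isSquare_pow c)

theorem isSquare_discr_of_splits {E : Type*} [Field E] [Algebra F E]
    (hodd : Odd (Module.finrank F E)) {P : Cubic F} (ha : P.a ≠ 0)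
    (hsplits : (P.toPoly.map (algebraMap F E)).Splits) : IsSquare P.discr := by
  obtain ⟨x, y, z, hroots⟩ := (Cubic.splits_iff_roots_eq_three ha).mp hsplits
  refine isSquare_of_isSquare_algebraMap_of_odd_finrank hodd ?_
  rw [Cubic.discr_eq_prod_three_roots ha hroots]
  exact IsSquare.sq _

theorem splits_adjoinRoot_of_normal {p : F[X]} [Fact (Irreducible p)]
    [hp : Normal F (AdjoinRoot p)] : (p.map (algebraMap F (AdjoinRoot p))).Splits := by
  have hne : p ≠ 0 := (Fact.out : Irreducible p).ne_zero
  refine (hp.splits (AdjoinRoot.root p)).of_dvd ?_ ?_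
  · exact (Polynomial.map_ne_zero_iff (algebraMap F _).injective).mpr
      (minpoly.ne_zero (AdjoinRoot.isIntegral_root hne))
  · rw [AdjoinRoot.minpoly_root hne]
    exact Polynomial.map_dvd _ (dvd_mul_right _ _)

theorem isSquare_of_normal_adjoinRoot_squareCubic [CharP F 3] {c : F}
    [Fact (Irreducible (squareCubic c))] [Normal F (AdjoinRoot (squareCubic c))] :
    IsSquare c := by
  rw [← discr_squareCubic c]
  refine isSquare_discr_of_splits (E := AdjoinRoot (squareCubic c)) ?_ one_ne_zero ?_
  · rw [finrank_adjoinRoot_squareCubic]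
    decide
  · rw [← squareCubic_eq_toPoly]
    exact splits_adjoinRoot_of_normal

theorem not_isSquare_of_map_eq_sq {R S : Type*} [Ring R] [CommRing S] [NoZeroDivisors S]
    {f : R →+* S} {c : R} {a : S} (hca : f c = a ^ 2) (ha : a ∉ f.range) : ¬ IsSquare c := by
  rintro ⟨b, rfl⟩
  rw [map_mul, ← sq, sq_eq_sq_iff_eq_or_eq_neg] at hca
  rcases hca with h | h
  · exact ha ⟨b, h⟩
  · exact ha ⟨-b, by rw [map_neg, h, neg_neg]⟩

end SquareDiscriminant

section Laurent

theorem order_add_eq_left_of_order_lt {Γ R : Type*} [LinearOrder Γ] [Zero Γ] [AddGroup R]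
    {x y : HahnSeries Γ R} (hx : x ≠ 0) (hxy : x.order < y.order) :
    (x + y).order = x.order := by
  rcases eq_or_ne y 0 with rfl | hy
  · rw [add_zero]
  have htop : (x + y).orderTop = x.orderTop := by
    refine HahnSeries.orderTop_add_eq_left ?_
    rwa [← HahnSeries.order_eq_orderTop_of_ne_zero hx,
      ← HahnSeries.order_eq_orderTop_of_ne_zero hy, WithTop.coe_lt_coe]
  have hne : x + y ≠ 0 := by
    rwa [← HahnSeries.orderTop_ne_top, htop, HahnSeries.orderTop_ne_top]
  rwa [← HahnSeries.order_eq_orderTop_of_ne_zero hne,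
    ← HahnSeries.order_eq_orderTop_of_ne_zero hx, WithTop.coe_inj] at htop

theorem order_add_nonneg {Γ R : Type*} [LinearOrder Γ] [Zero Γ] [AddMonoid R]
    {x y : HahnSeries Γ R} (hx : 0 ≤ x.order) (hy : 0 ≤ y.order) : 0 ≤ (x + y).order := by
  rcases eq_or_ne (x + y) 0 with h | h
  · rw [h, HahnSeries.order_zero]
  · exact (le_min hx hy).trans (HahnSeries.min_order_le_order_add h)

theorem order_cubic_eq_three_mul {R : Type*} [Ring R] [NoZeroDivisors R] {w : LaurentSeries R}
    (hneg : (w ^ 3 + w ^ 2 + w).order < 0) : (w ^ 3 + w ^ 2 + w).order = 3 * w.order := by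
  have hcube : (w ^ 3).order = 3 * w.order := HahnSeries.order_pow w 3
  have hsq : (w ^ 2).order = 2 * w.order := HahnSeries.order_pow w 2
  have hw : w.order < 0 := by
    by_contra! hnonneg
    exact hneg.not_ge (order_add_nonneg (order_add_nonneg (by omega) (by omega)) hnonneg)
  have hw0 : w ^ 3 ≠ 0 := ne_of_apply_ne HahnSeries.order (by rw [HahnSeries.order_zero]; omega)
  have hsum : (w ^ 3 + w ^ 2).order = 3 * w.order :=
    (order_add_eq_left_of_order_lt hw0 (by omega)).trans hcube
  have hsum0 : w ^ 3 + w ^ 2 ≠ 0 :=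
    ne_of_apply_ne HahnSeries.order (by rw [HahnSeries.order_zero]; omega)
  exact (order_add_eq_left_of_order_lt hsum0 (by omega)).trans hsum

theorem irreducible_squareCubic {k : Type*} [Field k] {c : LaurentSeries k} (hneg : c.order < 0)
    (hdvd : ¬ 3 ∣ c.order) : Irreducible (squareCubic c) := by
  refine irreducible_of_degree_le_three_of_not_isRoot (by rw [natDegree_squareCubic]; decide) ?_
  intro w hw
  obtain rfl : w ^ 3 + w ^ 2 + w = c :=
    sub_eq_zero.mp ((aeval_squareCubic c w).symm.trans hw)
  exact hdvd ⟨w.order, order_cubic_eq_three_mul hneg⟩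

variable {R S : Type*} [CommRing R] [CommRing S]

theorem lsMap_single (f : R →+* S) (n : ℤ) (r : R) :
    lsMap f (HahnSeries.single n r) = HahnSeries.single n (f r) :=
  HahnSeries.map_single f.toZeroHom

theorem coeff_mem_range_of_mem_range_lsMap {f : R →+* S} {x : LaurentSeries S}
    (hx : x ∈ (lsMap f).range) (n : ℤ) : x.coeff n ∈ f.range := by
  obtain ⟨y, rfl⟩ := hx
  exact ⟨y.coeff n, rfl⟩

theorem charP_laurentSeries (p : ℕ) [CharP R p] : CharP (LaurentSeries R) p :=
  charP_of_injective_ringHom (HahnSeries.C_injective (Γ := ℤ)) p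

end Laurent

section RationalFunctionField

theorem X_notMem_adjoin_X_pow (K : Type*) [Field K] {n : ℕ} (hn : n ≠ 1) :
    (RatFunc.X : RatFunc K) ∉ IntermediateField.adjoin K {(RatFunc.X : RatFunc K) ^ n} := by
  intro hX
  have htop : IntermediateField.adjoin K {(RatFunc.X : RatFunc K) ^ n} = ⊤ := by
    rwa [eq_top_iff, ← RatFunc.adjoin_X, IntermediateField.adjoin_simple_le_iff]
  have hdeg := RatFunc.finrank_eq_max_natDegree ((RatFunc.X : RatFunc K) ^ n)
  rw [htop, IntermediateField.finrank_top] at hdeg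
  rw [← RatFunc.algebraMap_X, ← map_pow, RatFunc.num_algebraMap, RatFunc.denom_algebraMap] at hdeg
  exact hn (by simpa using hdeg.symm)

variable (κ : Type) [Field κ]

theorem lsMap_single_uSq :
    lsMap (algebraMap (kOne κ) (RatFunc κ)) (HahnSeries.single (-2) (uSq κ)) =
      HahnSeries.single (-1) RatFunc.X ^ 2 := by
  rw [lsMap_single, HahnSeries.single_pow]
  rfl

theorem single_X_notMem_range_lsMap (n : ℤ) :
    HahnSeries.single n RatFunc.X ∉ (lsMap (algebraMap (kOne κ) (RatFunc κ))).range := by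
  intro hX
  obtain ⟨x, hx⟩ := coeff_mem_range_of_mem_range_lsMap hX n
  rw [HahnSeries.coeff_single_same] at hx
  have hmem : (RatFunc.X : RatFunc κ) ∈ kOne κ := hx ▸ SetLike.coe_mem x
  exact X_notMem_adjoin_X_pow κ (by decide) hmem

theorem order_single_uSq (n : ℤ) : (HahnSeries.single n (uSq κ)).order = n :=
  HahnSeries.order_single (Subtype.coe_ne_coe.mp (pow_ne_zero 2 RatFunc.X_ne_zero))

end RationalFunctionField

theorem nonGalois_descent_example_char_three_general {k₁ k₂ : Type*} [Field k₁] [Field k₂]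
    [CharP k₁ 3] (f : k₁ →+* k₂) {c : LaurentSeries k₁} {a : LaurentSeries k₂}
    (hca : lsMap f c = a ^ 2) (ha : a ∉ (lsMap f).range) (hneg : c.order < 0)
    (hdvd : ¬ 3 ∣ c.order) :
    letI : Algebra (LaurentSeries k₁) (LaurentSeries k₂) := (lsMap f).toAlgebra
    Irreducible (squareCubic c) ∧
    ∀ [Fact (Irreducible (squareCubic c))],
      Module.finrank (LaurentSeries k₁) (AdjoinRoot (squareCubic c)) = 3 ∧
      ¬ IsGalois (LaurentSeries k₁) (AdjoinRoot (squareCubic c)) ∧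
      Nonempty
        ((AdjoinRoot (squareCubic c) ⊗[LaurentSeries k₁] LaurentSeries k₂)
          ≃ₐ[LaurentSeries k₂] AdjoinRoot (artinSchreierCubic a)) := by
  let : Algebra (LaurentSeries k₁) (LaurentSeries k₂) := (lsMap f).toAlgebra
  have : CharP (LaurentSeries k₁) 3 := charP_laurentSeries 3
  have : CharP (LaurentSeries k₂) 3 := charP_of_injective_ringHom (lsMap f).injective 3
  have ha0 : a ≠ 0 := fun h => ha (h ▸ zero_mem _)
  refine ⟨irreducible_squareCubic hneg hdvd, finrank_adjoinRoot_squareCubic c, fun _ => ?_,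
    nonempty_adjoinRoot_squareCubic_tensor_equiv ha0.isUnit hca⟩
  exact not_isSquare_of_map_eq_sq hca ha isSquare_of_normal_adjoinRoot_squareCubic

set_option maxHeartbeats 1000000 in
/-- Over `F₁ = κ(u²)((t))` (with `char κ = 3`), the degree-3 non-Galois extension
`E₀ = F₁[W]/(W³ + W² + W - u²·t⁻²)` induces the Artin–Schreier extension
`E = F₂[Y]/(Y³ - Y - u·t⁻¹)` of `F₂ = κ(u)((t))`. -/
theorem nonGalois_descent_example_char_three
    (κ : Type) [Field κ] [CharP κ 3] :
    letI : Algebra (LaurentSeries (kOne κ)) (LaurentSeries (RatFunc κ)) := lsAlg κ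
    Irreducible (fZero κ) ∧
    ∀ [Fact (Irreducible (fZero κ))],
      Module.finrank (LaurentSeries (kOne κ)) (AdjoinRoot (fZero κ)) = 3 ∧
      ¬ IsGalois (LaurentSeries (kOne κ)) (AdjoinRoot (fZero κ)) ∧
      Nonempty
        ((AdjoinRoot (fZero κ) ⊗[LaurentSeries (kOne κ)] LaurentSeries (RatFunc κ))
          ≃ₐ[LaurentSeries (RatFunc κ)] AdjoinRoot (fTwo κ)) := by
  exact nonGalois_descent_example_char_three_general _ (lsMap_single_uSq κ)
    (single_X_notMem_range_lsMap κ _) (by rw [order_single_uSq]; decide)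
    (by rw [order_single_uSq]; decide)
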